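/- Let T be a rooted tree on the vertex set of a flow graph G that has the parent property, and let G' be the derived graph of G with respect to T. If P is a simple path from s to a vertex v in G, then there is a simple path from s to v in G' containing only vertices that lie on P. In particular, every vertex of G' is reachable from s in G', so G' is a flow graph with start vertex s. -/

import Mathlib

variable {V : Type*}

/-- `IsWalk A u v p`: `p` is a path from `u` to `v` in the digraph with arc
relation `A`, listing all of its vertices in order. -/
def IsWalk (A : V → V → Prop) (u v : V) (p : List V) : Prop :=
  p.Chain' A ∧ p.head? = some u ∧ p.getLast? = some v

/-- A flow graph: a directed graph with arc relation `A` and start vertex `s`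
such that every vertex is reachable from `s` and no arc enters `s`. -/
structure FlowGraph (V : Type*) where
  A : V → V → Prop
  s : V
  reach : ∀ v : V, ∃ p : List V, IsWalk A s v p
  no_enter : ∀ v : V, ¬ A v s

/-- `DomOn A s v w`: `v` lies on every path from `s` to `w` in the digraph with
arc relation `A`. -/
def DomOn (A : V → V → Prop) (s v w : V) : Prop :=
  ∀ p : List V, IsWalk A s w p → v ∈ p

/-- `v` dominates `w` in the flow graph `G`. -/
def FlowGraph.Dom (G : FlowGraph V) (v w : V) : Prop :=
  DomOn G.A G.s v w

/-- A rooted tree on vertex set `V`, given by a parent function: the root is a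
fixed point of the parent function, and iterating the parent function from any
vertex eventually reaches the root. -/
structure ParentTree (V : Type*) where
  parent : V → V
  root : V
  parent_root : parent root = root
  reaches_root : ∀ v : V, ∃ n : ℕ, parent^[n] v = root

/-- `T.Anc x y`: `x` is an ancestor of `y` in the rooted tree `T` (every vertex
is an ancestor of itself). -/
def ParentTree.Anc (T : ParentTree V) (x y : V) : Prop :=
  ∃ n : ℕ, T.parent^[n] y = x

/-- `T` has the parent property with respect to `G`: for every arc `(v, w)`,
the parent of `w` is an ancestor of `v` in `T`. -/
def ParentProperty (G : FlowGraph V) (T : ParentTree V) : Prop :=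
  ∀ v w : V, G.A v w → T.Anc (T.parent w) v

/-- The sibling property with respect to an arbitrary arc relation `A` with
start vertex `s`: no non-root vertex dominates a distinct vertex with the same
parent. -/
def SiblingPropertyOn (A : V → V → Prop) (s : V) (T : ParentTree V) : Prop :=
  ∀ v w : V, v ≠ T.root → w ≠ T.root → v ≠ w → T.parent v = T.parent w →
    ¬ DomOn A s v w

/-- `T` has the sibling property with respect to the flow graph `G`. -/
def SiblingProperty (G : FlowGraph V) (T : ParentTree V) : Prop :=
  SiblingPropertyOn G.A G.s T

/-- `T` is the dominator tree of the digraph with arc relation `A` and start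
vertex `s`: `T` is rooted at `s`, and the parent of every vertex `v ≠ s` is its
immediate dominator, i.e. a strict dominator of `v` that is dominated by every
strict dominator of `v`. -/
def IsDomTreeOn (A : V → V → Prop) (s : V) (T : ParentTree V) : Prop :=
  T.root = s ∧ ∀ v : V, v ≠ s →
    DomOn A s (T.parent v) v ∧ T.parent v ≠ v ∧
    ∀ u : V, DomOn A s u v → u ≠ v → DomOn A s u (T.parent v)

/-- `T` is the dominator tree of the flow graph `G`. -/
def IsDomTree (G : FlowGraph V) (T : ParentTree V) : Prop :=
  IsDomTreeOn G.A G.s T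

/-- `ord` is (the numbering of) a preorder of the rooted tree `T`: an injective
numbering of the vertices such that for every vertex `v` the descendants of `v`
are ordered consecutively, with `v` first. -/
def IsTreePreorder (T : ParentTree V) (ord : V → ℕ) : Prop :=
  Function.Injective ord ∧
  (∀ v x : V, T.Anc v x → ord v ≤ ord x) ∧
  (∀ v x y z : V, T.Anc v x → T.Anc v z → ord x ≤ ord y → ord y ≤ ord z →
    T.Anc v y)

/-- A preorder `ord` of `T` is low-high on the digraph with arc relation `A`
and start vertex `s`: for every `v ≠ s`, either `(t(v), v)` is an arc, or there
are arcs `(u, v)` and `(w, v)` with `u < v < w` in the order and `w` not a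
descendant of `v` in `T`. -/
def LowHighOn (A : V → V → Prop) (s : V) (T : ParentTree V) (ord : V → ℕ) :
    Prop :=
  IsTreePreorder T ord ∧
  ∀ v : V, v ≠ s → (A (T.parent v) v ∨
    ∃ u w : V, A u v ∧ A w v ∧ ord u < ord v ∧ ord v < ord w ∧ ¬ T.Anc v w)

/-- A low-high order of `T` on the flow graph `G`. -/
def LowHigh (G : FlowGraph V) (T : ParentTree V) (ord : V → ℕ) : Prop :=
  LowHighOn G.A G.s T ord

/-- `B` is (the arc relation of) a spanning tree of `G` rooted at `s`: a
subgraph of `G` in which no arc enters `s`, every vertex other than `s` has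
exactly one entering arc, and every vertex is reachable from `s`. -/
def IsSpanningTree (G : FlowGraph V) (B : V → V → Prop) : Prop :=
  (∀ u v : V, B u v → G.A u v) ∧
  (∀ v : V, ¬ B v G.s) ∧
  (∀ v : V, v ≠ G.s → ∃! u : V, B u v) ∧
  (∀ v : V, ∃ p : List V, IsWalk B G.s v p)

/-- Spanning trees `B` and `R` of `G` rooted at `s` are independent: for every
vertex `v`, the paths from `s` to `v` in `B` and in `R` have in common only
dominators of `v`. -/
def Independent (G : FlowGraph V) (B R : V → V → Prop) : Prop :=
  ∀ v : V, ∀ p q : List V, IsWalk B G.s v p → IsWalk R G.s v q →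
    ∀ x : V, x ∈ p → x ∈ q → G.Dom x v

/-- Spanning trees `B` and `R` of `G` rooted at `s` are strongly independent:
for every pair of vertices `v`, `w`, either the path from `s` to `v` in `B` and
the path from `s` to `w` in `R` have in common only common dominators of `v`
and `w`, or the same holds with the roles of `B` and `R` exchanged. -/
def StronglyIndependent (G : FlowGraph V) (B R : V → V → Prop) : Prop :=
  ∀ v w : V,
    (∀ p q : List V, IsWalk B G.s v p → IsWalk R G.s w q →
      ∀ x : V, x ∈ p → x ∈ q → G.Dom x v ∧ G.Dom x w) ∨
    (∀ p q : List V, IsWalk R G.s v p → IsWalk B G.s w q →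
      ∀ x : V, x ∈ p → x ∈ q → G.Dom x v ∧ G.Dom x w)

/-- `IsDerivedArcOf G T v b a`: `(a, b)` is the derived arc of the arc `(v, b)`
of `G` with respect to `T`: `b` is not an ancestor of `v` in `T`, and `a = v`
if `v` is the parent of `b`, while otherwise `a` is the sibling of `b` in `T`
that is an ancestor of `v`. -/
def IsDerivedArcOf (G : FlowGraph V) (T : ParentTree V) (v b a : V) : Prop :=
  G.A v b ∧ ¬ T.Anc b v ∧
    ((v = T.parent b ∧ a = v) ∨
     (v ≠ T.parent b ∧ a ≠ T.root ∧ T.parent a = T.parent b ∧ T.Anc a v))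

/-- The arc relation of the derived graph of `G` with respect to `T`. -/
def DerivedArc (G : FlowGraph V) (T : ParentTree V) (a b : V) : Prop :=
  ∃ v : V, IsDerivedArcOf G T v b a

/-- `S` is the vertex set of a strongly connected subgraph of the digraph with
arc relation `A`. -/
def StronglyConnectedSet (A : V → V → Prop) (S : Set V) : Prop :=
  S.Nonempty ∧ ∀ u ∈ S, ∀ v ∈ S, ∃ p : List V,
    IsWalk A u v p ∧ ∀ x ∈ p, x ∈ S

/-- `G` is reducible: every strongly connected subgraph has a single entry
vertex, i.e. a vertex of the subgraph contained in every path from `s` to a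
vertex of the subgraph. -/
def Reducible (G : FlowGraph V) : Prop :=
  ∀ S : Set V, StronglyConnectedSet G.A S →
    ∃ v ∈ S, ∀ u ∈ S, ∀ p : List V, IsWalk G.A G.s u p → v ∈ p

/-- A digraph is acyclic if it has no cycle (a path from a vertex to itself
with at least one arc). -/
def Acyclic (A : V → V → Prop) : Prop :=
  ¬ ∃ (v : V) (p : List V), IsWalk A v v p ∧ 2 ≤ p.length

/-- `IsHighWalk A ν u v p`: `p` is a high path from `u` to `v`: a path all of
whose vertices other than `u` and `v` are greater (in the numbering `ν`) than
both `u` and `v`. -/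
def IsHighWalk (A : V → V → Prop) (ν : V → ℕ) (u v : V) (p : List V) : Prop :=
  IsWalk A u v p ∧ ∀ x ∈ p, x ≠ u → x ≠ v → ν u < ν x ∧ ν v < ν x

/-- `v` is reachable from `s` by a simple path inside the set `S`. -/
def SimpleReach (A : V → V → Prop) (s : V) (S : Set V) (v : V) : Prop :=
  ∃ q : List V, IsWalk A s v q ∧ q.Nodup ∧ ∀ x ∈ q, x ∈ S

theorem SimpleReach.mono {A : V → V → Prop} {s : V} {S S' : Set V} {v : V}
    (h : SimpleReach A s S v) (hS : S ⊆ S') : SimpleReach A s S' v := by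
  obtain ⟨q, h1, h2, h3⟩ := h
  exact ⟨q, h1, h2, fun x hx => hS (h3 x hx)⟩

theorem SimpleReach.step {A : V → V → Prop} {s : V} {S : Set V} {v w : V}
    (h : SimpleReach A s S v) (hA : A v w) (hw : w ∈ S) : SimpleReach A s S w := by
  obtain ⟨q, ⟨h1, h2, h3⟩, h4, h5⟩ := h
  by_cases hq : w ∈ q
  · obtain ⟨l1, l2, rfl⟩ := List.append_of_mem hq
    have e : l1 ++ w :: l2 = (l1 ++ [w]) ++ l2 := by simp
    rw [e] at h1 h2 h4 h5
    refine ⟨l1 ++ [w], ⟨?_, ?_, by simp⟩, ?_, ?_⟩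
    · exact (List.isChain_append.1 h1).1
    · cases l1 <;> simpa using h2
    · exact (List.nodup_append.1 h4).1
    · intro x hx
      exact h5 x (List.mem_append_left _ hx)
  · refine ⟨q ++ [w], ⟨?_, ?_, by simp⟩, ?_, ?_⟩
    · refine List.isChain_append.2 ⟨h1, List.isChain_singleton _, ?_⟩
      intro x hx y hy
      rw [h3] at hx
      simp at hx hy
      subst hx; subst hy; exact hA
    · simp [h2]
    · refine List.nodup_append.2 ⟨h4, by simp, ?_⟩
      intro a ha b hb
      simp at hb
      subst hb
      rintro rfl
      exact hq ha
    · intro x hx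
      rcases List.mem_append.1 hx with hx | hx
      · exact h5 x hx
      · simp at hx
        subst hx; exact hw

theorem anc_trans {T : ParentTree V} {x y z : V} (h : T.Anc x y) (h' : T.Anc y z) :
    T.Anc x z := by
  obtain ⟨n, rfl⟩ := h
  obtain ⟨m, rfl⟩ := h'
  exact ⟨n + m, Function.iterate_add_apply _ _ _ _⟩

theorem derived_exists (G : FlowGraph V) (T : ParentTree V)
    (hpp : ParentProperty G T) {v w : V} (hA : G.A v w) (hn : ¬ T.Anc w v) :
    ∃ a, T.Anc a v ∧ DerivedArc G T a w := by
  classical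
  have hex : ∃ n : ℕ, T.parent^[n] v = T.parent w := hpp v w hA
  have hs := Nat.find_spec hex
  have hmin := fun m => Nat.find_min hex (m := m)
  generalize Nat.find hex = n at hs hmin
  cases n with
  | zero => exact ⟨v, ⟨0, rfl⟩, v, hA, hn, Or.inl ⟨hs, rfl⟩⟩
  | succ n =>
    rw [Function.iterate_succ_apply'] at hs
    refine ⟨T.parent^[n] v, ⟨n, rfl⟩, v, hA, hn, Or.inr ⟨?_, ?_, hs, ⟨n, rfl⟩⟩⟩
    · exact hmin 0 (Nat.succ_pos n)
    · intro hr
      apply hmin n (Nat.lt_succ_self n)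
      rw [hr, T.parent_root] at hs
      rw [hr, hs]

theorem anc_reach (G : FlowGraph V) (T : ParentTree V)
    (hroot : T.root = G.s) (hpp : ParentProperty G T) (p : List V) :
    ∀ v, IsWalk G.A G.s v p → ∀ a, T.Anc a v →
      SimpleReach (DerivedArc G T) G.s {x | x ∈ p} a := by
  induction p using List.reverseRecOn with
  | nil => intro v h; simp [IsWalk] at h
  | append_singleton p w ih =>
    rintro v ⟨h1, h2, h3⟩ a ha
    simp at h3
    subst h3
    rcases List.eq_nil_or_concat p with rfl | ⟨p', u, rfl⟩
    · simp at h2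
      subst h2
      obtain ⟨n, hn⟩ := ha
      have : T.parent^[n] G.s = G.s := by
        apply Function.iterate_fixed
        rw [← hroot, T.parent_root]
      rw [this] at hn
      subst hn
      exact ⟨[G.s], ⟨List.isChain_singleton _, rfl, rfl⟩, by simp, by simp⟩
    · have hc := List.isChain_append.1 h1
      have hA : G.A u w := hc.2.2 u (by simp) w (by simp)
      have ih' := ih u ⟨hc.1, by
        cases p' <;> simpa using h2, by simp⟩
      have sub : {x | x ∈ p'.concat u} ⊆ {x | x ∈ p'.concat u ++ [w]} :=
        fun x hx => List.mem_append_left _ hx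
      obtain ⟨n, hn⟩ := ha
      cases n with
      | succ n =>
        exact (ih' a (anc_trans ⟨n, hn⟩ (hpp u w hA))).mono sub
      | zero =>
        change w = a at hn
        subst hn
        by_cases hanc : T.Anc w u
        · exact (ih' w hanc).mono sub
        · obtain ⟨b, hb, hd⟩ := derived_exists G T hpp hA hanc
          exact ((ih' b hb).mono sub).step hd (by simp)

/-- If `T` has the parent property and `P` is a simple path from `s` to `v` in
`G`, then the derived graph `G'` contains a simple path from `s` to `v` all of
whose vertices lie on `P`. In particular every vertex of `G'` is reachable
from `s` in `G'`, and no arc of `G'` enters `s`, so `G'` is a flow graph with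
start vertex `s`. -/
theorem stmt9 [Fintype V] (G : FlowGraph V) (T : ParentTree V)
    (hroot : T.root = G.s) (hpp : ParentProperty G T) :
    (∀ (v : V) (p : List V), IsWalk G.A G.s v p → p.Nodup →
      ∃ q : List V, IsWalk (DerivedArc G T) G.s v q ∧ q.Nodup ∧
        ∀ x ∈ q, x ∈ p) ∧
    (∀ v : V, ∃ q : List V, IsWalk (DerivedArc G T) G.s v q) ∧
    (∀ v : V, ¬ DerivedArc G T v G.s) := by
  refine ⟨fun v p hp _ => anc_reach G T hroot hpp p v hp v ⟨0, rfl⟩, fun v => ?_, ?_⟩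
  · obtain ⟨p, hp⟩ := G.reach v
    obtain ⟨q, hq, _⟩ := anc_reach G T hroot hpp p v hp v ⟨0, rfl⟩
    exact ⟨q, hq⟩
  · rintro v ⟨u, hA, _⟩
    exact G.no_enter u hA
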